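/- arXiv:2112.06272 — 2 statements merged into one kernel-verified Lean document; each statement's English description precedes it below -/
import Mathlib

section
/- Let N ≥ 2 be an integer, let Ω ⊆ ℝ^N be a bounded Lipschitz open set, and fix s₀ ∈ [1/2, 1). Then limsup_{s ↘ s₀} S_{N,s}(Ω) ≤ S_{N,s₀}(Ω). -/
open MeasureTheory Real Filter Topology Set

noncomputable section

/-- Euclidean space ℝ^N. -/
abbrev Euc (N : ℕ) := EuclideanSpace ℝ (Fin N)

/-- The normalization constant c_{N,s}. -/
def cNs (N : ℕ) (s : ℝ) : ℝ :=
  s * (4 : ℝ) ^ s * Real.Gamma (((N : ℝ) + 2 * s) / 2) /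
    (Real.pi ^ ((N : ℝ) / 2) * Real.Gamma (1 - s))

/-- The Gagliardo quadratic form Q_{N,s,U}. -/
def gagliardo (N : ℕ) (s : ℝ) (U : Set (Euc N)) (u : Euc N → ℝ) : ℝ :=
  (cNs N s / 2) * ∫ x in U, ∫ y in U, (u x - u y) ^ 2 / ‖x - y‖ ^ ((N : ℝ) + 2 * s)

/-- The L^p norm of u on a set U. -/
def lpNormOn (N : ℕ) (p : ℝ) (U : Set (Euc N)) (u : Euc N → ℝ) : ℝ :=
  (∫ x in U, |u x| ^ p) ^ (1 / p)

/-- The fractional critical Sobolev exponent 2*_s = 2N/(N-2s). -/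
def critExp (N : ℕ) (s : ℝ) : ℝ := 2 * (N : ℝ) / ((N : ℝ) - 2 * s)

/-- Smooth compactly supported test function in U. -/
def testFun (N : ℕ) (U : Set (Euc N)) (u : Euc N → ℝ) : Prop :=
  ContDiff ℝ (⊤ : ℕ∞) u ∧ HasCompactSupport u ∧ tsupport u ⊆ U

/-- The critical fractional Sobolev constant S_{N,s}(U). -/
def sobolevConst (N : ℕ) (s : ℝ) (U : Set (Euc N)) : ℝ :=
  sInf { r | ∃ u, testFun N U u ∧ ¬ (∀ x, u x = 0) ∧
    r = gagliardo N s U u / (lpNormOn N (critExp N s) U u) ^ 2 }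

/-- The open cylinder B'_r × (-r, r) in ℝ^{N-1} × ℝ. -/
def cylinder (N : ℕ) (r : ℝ) : Set (EuclideanSpace ℝ (Fin (N - 1)) × ℝ) :=
  (Metric.ball 0 r) ×ˢ (Set.Ioo (-r) r)

/-- A bounded open set is Lipschitz: near each boundary point the boundary is the
bi-Lipschitz image of a flat piece. -/
def IsLipschitzSet (N : ℕ) (Ω : Set (Euc N)) : Prop :=
  ∀ q ∈ frontier Ω, ∃ (r C : ℝ) (Φ : EuclideanSpace ℝ (Fin (N - 1)) × ℝ → Euc N),
    0 < r ∧ 1 < C ∧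
    (∀ x ∈ cylinder N r, ∀ y ∈ cylinder N r,
      C⁻¹ * dist x y ≤ dist (Φ x) (Φ y) ∧ dist (Φ x) (Φ y) ≤ C * dist x y) ∧
    IsOpen (Φ '' cylinder N r) ∧ q ∈ Φ '' cylinder N r ∧
    Φ '' ((Metric.ball 0 r) ×ˢ (Set.Ioo 0 r)) ⊆ Ω ∧
    Φ '' ((Metric.ball 0 r) ×ˢ ({0} : Set ℝ)) ⊆ frontier Ω

/-- Membership in H^s_0(U): approximation by smooth compactly supported functions
in L²(U) and in the Gagliardo form. -/
def memHs0 (N : ℕ) (s : ℝ) (U : Set (Euc N)) (u : Euc N → ℝ) : Prop :=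
  ∃ v : ℕ → Euc N → ℝ, (∀ k, testFun N U (v k)) ∧
    Tendsto (fun k => ∫ x in U, (v k x - u x) ^ 2) atTop (nhds 0) ∧
    Tendsto (fun k => gagliardo N s U (fun x => v k x - u x)) atTop (nhds 0)

/-- A radial function on ℝ^N. -/
def IsRadial (N : ℕ) (u : Euc N → ℝ) : Prop :=
  ∀ x y : Euc N, ‖x‖ = ‖y‖ → u x = u y

/-- The open unit ball of ℝ^N. -/
def unitBall (N : ℕ) : Set (Euc N) := Metric.ball 0 1

/-- The radial critical Sobolev constant S_{N,s,rad}(B,h) on the unit ball. -/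
def sobolevConstRad (N : ℕ) (s : ℝ) (h : Euc N → ℝ) : ℝ :=
  sInf { r | ∃ u, testFun N (unitBall N) u ∧ IsRadial N u ∧ ¬ (∀ x, u x = 0) ∧
    r = (gagliardo N s (unitBall N) u + ∫ x in unitBall N, h x * (u x) ^ 2) /
        (lpNormOn N (critExp N s) (unitBall N) u) ^ 2 }

/-- Membership in H^s_{0,rad}(B): radial, approximated by radial test functions. -/
def memHs0rad (N : ℕ) (s : ℝ) (u : Euc N → ℝ) : Prop :=
  IsRadial N u ∧ ∃ v : ℕ → Euc N → ℝ,
    (∀ k, testFun N (unitBall N) (v k) ∧ IsRadial N (v k)) ∧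
    Tendsto (fun k => ∫ x in unitBall N, (v k x - u x) ^ 2) atTop (nhds 0) ∧
    Tendsto (fun k => gagliardo N s (unitBall N) (fun x => v k x - u x)) atTop (nhds 0)

/-- The fractional Laplacian of a test function. -/
def fracLap (N : ℕ) (s : ℝ) (φ : Euc N → ℝ) (x : Euc N) : ℝ :=
  (cNs N s / 2) * ∫ z : Euc N, (2 * φ x - φ (x + z) - φ (x - z)) / ‖z‖ ^ ((N : ℝ) + 2 * s)

/-!
For a fixed test function `u ≢ 0` the Sobolev quotient `Q_{N,s,U}(u) / ‖u‖²` is continuous in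
`s ∈ (0, 1)`, `2s < N`, and an infimum of continuous functions is upper semicontinuous.

The only delicate point is the continuity of the Gagliardo form. Since `u` is Lipschitz, bounded and
supported in a compact set `K`, its integrand with kernel exponent `α` is at most
`C (1_K(x) + 1_K(y)) min(1, |x - y|²) / |x - y|^α`. This is integrable on `ℝ^N × ℝ^N` for
`N < α < N + 2`, and for `a ≤ α ≤ b` the sum of its values at `a` and `b` dominates it, so dominated
convergence applies.
-/

theorem limsup_le_of_upperSemicontinuousAt {α β : Type*} [TopologicalSpace α]
    [ConditionallyCompleteLinearOrder β] [DenselyOrdered β] {f : α → β} {x : α} {l : Filter α}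
    [l.NeBot] (hf : UpperSemicontinuousAt f x) (hl : l ≤ 𝓝 x)
    (hbdd : (𝓝 x).IsBoundedUnder (· ≥ ·) f) : limsup f l ≤ f x :=
  le_of_forall_gt_imp_ge_of_dense fun y hy =>
    limsup_le_of_le (hbdd.mono hl).isCoboundedUnder_le
      (((hf y hy).filter_mono hl).mono fun _ h => h.le)

section Levy

open Module

variable {E : Type*} [NormedAddCommGroup E]

/-- The kernel `min(1, |z|²) / |z|^α`, the density `1 / |z|^α` of a stable Lévy measure truncated so
as to be integrable. It majorizes the Gagliardo integrand of a bounded Lipschitz function, with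
`z = x - y`. Its value at `z = 0` is `0` for every `α`. -/
def levyKernel (α : ℝ) (z : E) : ℝ :=
  min 1 (‖z‖ ^ 2) / ‖z‖ ^ α

theorem levyKernel_nonneg (α : ℝ) (z : E) : 0 ≤ levyKernel α z := by
  unfold levyKernel
  positivity

theorem levyKernel_le_add {a b α : ℝ} (hα : α ∈ Icc a b) (z : E) :
    levyKernel α z ≤ levyKernel a z + levyKernel b z := by
  rcases eq_or_ne z 0 with rfl | hz
  · simp [levyKernel]
  have hz_pos : 0 < ‖z‖ := norm_pos_iff.2 hz
  have hmin : 0 ≤ min 1 (‖z‖ ^ 2) := by positivity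
  rcases le_total ‖z‖ 1 with h_le | h_ge
  · refine le_add_of_nonneg_of_le (levyKernel_nonneg a z) (div_le_div_of_nonneg_left hmin ?_ ?_)
    · positivity
    · exact rpow_le_rpow_of_exponent_ge hz_pos h_le hα.2
  · refine le_add_of_le_of_nonneg (div_le_div_of_nonneg_left hmin ?_ ?_) (levyKernel_nonneg b z)
    · positivity
    · exact rpow_le_rpow_of_exponent_le h_ge hα.1

theorem integrableOn_rpow_mul_min_one_sq {β : ℝ} (hβ : β ∈ Ioo (-3) (-1)) :
    IntegrableOn (fun t : ℝ => t ^ β * min 1 (t ^ 2)) (Ioi 0) := by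
  have near_zero : IntegrableOn (fun t : ℝ => t ^ β * min 1 (t ^ 2)) (Ioo 0 1) := by
    have h : IntegrableOn (fun t : ℝ => t ^ (β + 2)) (Ioo 0 1) :=
      (intervalIntegral.integrableOn_Ioo_rpow_iff one_pos).2 (by linarith [hβ.1])
    refine h.congr_fun (fun t ht => ?_) measurableSet_Ioo
    simp only [min_eq_right (pow_le_one₀ ht.1.le ht.2.le : t ^ 2 ≤ 1), rpow_add ht.1, rpow_two]
  have near_infty : IntegrableOn (fun t : ℝ => t ^ β * min 1 (t ^ 2)) (Ici 1) := by
    have h : IntegrableOn (fun t : ℝ => t ^ β) (Ici 1) :=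
      (integrableOn_Ioi_rpow_of_lt hβ.2 one_pos).congr_set_ae Ioi_ae_eq_Ici.symm
    refine h.congr_fun (fun t ht => ?_) measurableSet_Ici
    simp only [min_eq_left (one_le_pow₀ ht : 1 ≤ t ^ 2), mul_one]
  rw [← Ioo_union_Ici_eq_Ioi one_pos]
  exact near_zero.union near_infty

variable [NormedSpace ℝ E] [FiniteDimensional ℝ E] [MeasurableSpace E] [BorelSpace E]
  (μ : Measure E) [μ.IsAddHaarMeasure]

theorem integrable_levyKernel {α : ℝ} (hα : α ∈ Ioo (finrank ℝ E : ℝ) (finrank ℝ E + 2)) :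
    Integrable (levyKernel α : E → ℝ) μ := by
  rcases subsingleton_or_nontrivial E with _ | _
  · have : IsFiniteMeasure μ := ⟨finite_univ.isCompact.measure_lt_top⟩
    exact .of_subsingleton
  have hd : (↑(finrank ℝ E - 1) : ℝ) = finrank ℝ E - 1 := Nat.cast_pred finrank_pos
  refine (integrable_fun_norm_addHaar μ (f := fun t : ℝ => min 1 (t ^ 2) / t ^ α)).2 ?_
  refine (integrableOn_rpow_mul_min_one_sq (β := finrank ℝ E - 1 - α)
    ⟨by linarith [hα.2], by linarith [hα.1]⟩).congr_fun (fun t ht => ?_) measurableSet_Ioi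
  simp only [rpow_sub ht _ α, smul_eq_mul, ← rpow_natCast t (finrank ℝ E - 1), hd]
  ring

end Levy

theorem integrable_add_mul_comp_sub {G : Type*} [MeasurableSpace G] [AddCommGroup G]
    [MeasurableAdd₂ G] [MeasurableNeg G] {μ : Measure G} [SFinite μ] [μ.IsAddLeftInvariant]
    [μ.IsNegInvariant] {f g : G → ℝ} (hf : Integrable f μ) (hg : Integrable g μ) :
    Integrable (fun p : G × G => (f p.1 + f p.2) * g (p.1 - p.2)) (μ.prod μ) := by
  have h_snd : Integrable (fun p : G × G => f p.2 * g (p.1 - p.2)) (μ.prod μ) :=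
    hf.convolution_integrand (.mul ℝ ℝ) hg
  have h_fst : Integrable (fun p : G × G => f p.1 * g (p.1 - p.2)) (μ.prod μ) := by
    simpa [Function.comp_def] using (hf.convolution_integrand (.mul ℝ ℝ) hg.comp_neg).swap
  exact (h_fst.add h_snd).congr (.of_forall fun p => (add_mul _ _ _).symm)

section Gagliardo

open Module

variable {E : Type*} [NormedAddCommGroup E]

/-- The integrand of the Gagliardo form with kernel exponent `α`, as a function of the pair
`p = (x, y)`. In dimension `N` the form of order `s` has `α = N + 2s`. -/
def gagliardoIntegrand (u : E → ℝ) (α : ℝ) (p : E × E) : ℝ :=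
  (u p.1 - u p.2) ^ 2 / ‖p.1 - p.2‖ ^ α

theorem gagliardoIntegrand_nonneg (u : E → ℝ) (α : ℝ) (p : E × E) :
    0 ≤ gagliardoIntegrand u α p := by
  unfold gagliardoIntegrand
  positivity

theorem continuous_gagliardoIntegrand_exponent (u : E → ℝ) (p : E × E) :
    Continuous fun α => gagliardoIntegrand u α p := by
  rcases eq_or_ne p.1 p.2 with h_eq | h_ne
  · simp [gagliardoIntegrand, h_eq, continuous_const]
  · have h_pos : 0 < ‖p.1 - p.2‖ := norm_pos_iff.2 (sub_ne_zero.2 h_ne)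
    exact continuous_const.div (continuous_const.rpow continuous_id fun _ => .inl h_pos.ne')
      fun α => (rpow_pos_of_pos h_pos α).ne'

theorem sq_sub_le_mul_min_one_sq {u : E → ℝ} {L : NNReal} {M : ℝ} (hL : LipschitzWith L u)
    (hM : ∀ x, |u x| ≤ M) (x y : E) :
    (u x - u y) ^ 2 ≤ ((2 * M) ^ 2 + L ^ 2) * min 1 (‖x - y‖ ^ 2) := by
  have h_bounded : (u x - u y) ^ 2 ≤ (2 * M) ^ 2 :=
    sq_le_sq' (by linarith [neg_le_of_abs_le (hM x), le_of_abs_le (hM y)])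
      (by linarith [le_of_abs_le (hM x), neg_le_of_abs_le (hM y)])
  have h_lipschitz : (u x - u y) ^ 2 ≤ L ^ 2 * ‖x - y‖ ^ 2 := by
    rw [← sq_abs, ← mul_pow]
    gcongr
    simpa only [dist_eq_norm, norm_eq_abs] using hL.dist_le_mul x y
  rw [mul_min_of_nonneg _ _ (by positivity), le_min_iff, mul_one, add_mul]
  exact ⟨h_bounded.trans (le_add_of_nonneg_right (by positivity)),
    h_lipschitz.trans (le_add_of_nonneg_left (by positivity))⟩

theorem exists_gagliardoIntegrand_le {u : E → ℝ} {L : NNReal} (hL : LipschitzWith L u)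
    (hu : HasCompactSupport u) : ∃ C : ℝ, 0 ≤ C ∧ ∀ (α : ℝ) (p : E × E),
      gagliardoIntegrand u α p ≤
        C * (((tsupport u).indicator 1 p.1 + (tsupport u).indicator 1 p.2) *
          levyKernel α (p.1 - p.2)) := by
  obtain ⟨M, hM⟩ := hu.exists_bound_of_continuous hL.continuous
  refine ⟨(2 * M) ^ 2 + L ^ 2, by positivity, fun α p => ?_⟩
  have ind_nonneg (x : E) : (0 : ℝ) ≤ (tsupport u).indicator 1 x :=
    indicator_nonneg (fun _ _ => zero_le_one) x
  by_cases h_off : p.1 ∉ tsupport u ∧ p.2 ∉ tsupport u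
  · simp [gagliardoIntegrand, image_eq_zero_of_notMem_tsupport h_off.1,
      image_eq_zero_of_notMem_tsupport h_off.2, indicator_of_notMem h_off.1,
      indicator_of_notMem h_off.2]
  have h_ind : (1 : ℝ) ≤ (tsupport u).indicator 1 p.1 + (tsupport u).indicator 1 p.2 := by
    rcases not_and_or.1 h_off with h | h
    · simpa [indicator_of_mem (not_not.1 h)] using ind_nonneg p.2
    · simpa [indicator_of_mem (not_not.1 h)] using ind_nonneg p.1
  calc gagliardoIntegrand u α p
      ≤ ((2 * M) ^ 2 + L ^ 2) * min 1 (‖p.1 - p.2‖ ^ 2) / ‖p.1 - p.2‖ ^ α := by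
        unfold gagliardoIntegrand
        gcongr
        exact sq_sub_le_mul_min_one_sq hL hM p.1 p.2
    _ = ((2 * M) ^ 2 + L ^ 2) * levyKernel α (p.1 - p.2) := mul_div_assoc ..
    _ ≤ _ := by
        gcongr
        exact le_mul_of_one_le_left (levyKernel_nonneg ..) h_ind

variable [NormedSpace ℝ E] [FiniteDimensional ℝ E] [MeasurableSpace E] [BorelSpace E]
  (μ : Measure E) [μ.IsAddHaarMeasure] {u : E → ℝ} {L : NNReal}

theorem measurable_gagliardoIntegrand (hu : Measurable u) (α : ℝ) :
    Measurable (gagliardoIntegrand u α) := by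
  unfold gagliardoIntegrand
  fun_prop

theorem exists_integrable_forall_gagliardoIntegrand_le (hL : LipschitzWith L u)
    (hu : HasCompactSupport u) {a b : ℝ} (ha : a ∈ Ioo (finrank ℝ E : ℝ) (finrank ℝ E + 2))
    (hb : b ∈ Ioo (finrank ℝ E : ℝ) (finrank ℝ E + 2)) :
    ∃ bound : E × E → ℝ, Integrable bound (μ.prod μ) ∧
      ∀ α ∈ Icc a b, ∀ p, ‖gagliardoIntegrand u α p‖ ≤ bound p := by
  obtain ⟨C, hC, hle⟩ := exists_gagliardoIntegrand_le hL hu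
  have h_ind : Integrable ((tsupport u).indicator (1 : E → ℝ)) μ :=
    (integrable_indicator_iff (isClosed_tsupport u).measurableSet).2
      (continuousOn_const.integrableOn_compact hu.isCompact)
  refine ⟨_, (integrable_add_mul_comp_sub h_ind
    ((integrable_levyKernel μ ha).add (integrable_levyKernel μ hb))).const_mul C,
    fun α hα p => ?_⟩
  rw [norm_of_nonneg (gagliardoIntegrand_nonneg u α p)]
  refine (hle α p).trans (mul_le_mul_of_nonneg_left (mul_le_mul_of_nonneg_left
    (levyKernel_le_add hα _) ?_) hC)
  exact add_nonneg (indicator_nonneg (fun _ _ => zero_le_one) _)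
    (indicator_nonneg (fun _ _ => zero_le_one) _)

theorem integrable_gagliardoIntegrand (hL : LipschitzWith L u) (hu : HasCompactSupport u)
    {α : ℝ} (hα : α ∈ Ioo (finrank ℝ E : ℝ) (finrank ℝ E + 2)) :
    Integrable (gagliardoIntegrand u α) (μ.prod μ) := by
  obtain ⟨bound, h_int, h_le⟩ := exists_integrable_forall_gagliardoIntegrand_le μ hL hu hα hα
  exact h_int.mono'
    (measurable_gagliardoIntegrand hL.continuous.measurable α).aestronglyMeasurable
    (.of_forall (h_le α ⟨le_rfl, le_rfl⟩))

theorem continuousOn_setIntegral_gagliardoIntegrand (hL : LipschitzWith L u)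
    (hu : HasCompactSupport u) (U : Set E) :
    ContinuousOn (fun α => ∫ x in U, ∫ y in U, gagliardoIntegrand u α (x, y) ∂μ ∂μ)
      (Ioo (finrank ℝ E : ℝ) (finrank ℝ E + 2)) := by
  suffices h_prod : ContinuousOn (fun α => ∫ p in U ×ˢ U, gagliardoIntegrand u α p ∂μ.prod μ)
      (Ioo (finrank ℝ E : ℝ) (finrank ℝ E + 2)) from
    h_prod.congr fun α hα =>
      (setIntegral_prod _ (integrable_gagliardoIntegrand μ hL hu hα).integrableOn).symm
  intro α hα
  obtain ⟨a, ha, haα⟩ := exists_between hα.1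
  obtain ⟨b, hαb, hb⟩ := exists_between hα.2
  obtain ⟨bound, h_int, h_le⟩ := exists_integrable_forall_gagliardoIntegrand_le μ hL hu
    ⟨ha, haα.trans hα.2⟩ ⟨hα.1.trans hαb, hb⟩
  refine (continuousAt_of_dominated (.of_forall fun β => ?_) ?_ h_int.integrableOn
    (.of_forall fun p => ?_)).continuousWithinAt
  · exact (measurable_gagliardoIntegrand hL.continuous.measurable β).aestronglyMeasurable
  · filter_upwards [Icc_mem_nhds haα hαb] with β hβ using .of_forall (h_le β hβ)
  · exact (continuous_gagliardoIntegrand_exponent u p).continuousAt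

end Gagliardo

section RpowIntegral

variable {X : Type*} [TopologicalSpace X] [MeasurableSpace X] [BorelSpace X] (μ : Measure X)
  [IsFiniteMeasureOnCompacts μ] {u : X → ℝ}

theorem integral_abs_rpow_pos [μ.IsOpenPosMeasure] (hu : Continuous u)
    (hu_supp : HasCompactSupport u) {p : ℝ} (hp : 0 < p) {x : X} (hx : u x ≠ 0) :
    0 < ∫ x, |u x| ^ p ∂μ :=
  (hu.abs.rpow_const fun _ => .inr hp.le).integral_pos_of_hasCompactSupport_nonneg_nonzero
    (hu_supp.comp_left (g := fun t : ℝ => |t| ^ p) (by simp [hp.ne'])) (fun _ => by positivity)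
    (rpow_pos_of_pos (abs_pos.2 hx) p).ne'

theorem continuousOn_integral_abs_rpow (hu : Continuous u) (hu_supp : HasCompactSupport u) :
    ContinuousOn (fun p : ℝ => ∫ x, |u x| ^ p ∂μ) (Ioi 0) := by
  intro q hq
  obtain ⟨M, hM⟩ := hu_supp.exists_bound_of_continuous hu
  have h_near : ∀ᶠ p in 𝓝 q, p ∈ Ioo 0 (q + 1) := Ioo_mem_nhds hq (lt_add_one q)
  refine (continuousAt_of_dominated
    (bound := (tsupport u).indicator fun _ => (1 + M) ^ (q + 1)) ?_ ?_ ?_ ?_).continuousWithinAt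
  · exact .of_forall fun p => (hu.measurable.abs.pow_const p).aestronglyMeasurable
  · filter_upwards [h_near] with p hp
    refine .of_forall fun x => ?_
    rw [norm_of_nonneg (by positivity)]
    by_cases hx : x ∈ tsupport u
    · have hux : |u x| ≤ M := hM x
      rw [indicator_of_mem hx]
      calc |u x| ^ p ≤ (1 + M) ^ p := rpow_le_rpow (abs_nonneg _) (by linarith) hp.1.le
        _ ≤ (1 + M) ^ (q + 1) :=
          rpow_le_rpow_of_exponent_le (by linarith [abs_nonneg (u x)]) hp.2.le
    · simp [indicator_of_notMem hx, image_eq_zero_of_notMem_tsupport hx, hp.1.ne']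
  · exact (integrable_indicator_iff (isClosed_tsupport u).measurableSet).2
      (continuousOn_const.integrableOn_compact' hu_supp.isCompact
        (isClosed_tsupport u).measurableSet)
  · exact .of_forall fun x => continuousAt_const.rpow continuousAt_id (.inr hq)

end RpowIntegral

theorem continuousAt_Gamma_of_pos {t : ℝ} (ht : 0 < t) : ContinuousAt Gamma t :=
  (differentiableAt_Gamma fun m => ((neg_nonpos.2 m.cast_nonneg).trans_lt ht).ne').continuousAt

section SobolevQuotient

variable {N : ℕ} {s : ℝ} {U : Set (Euc N)} {u : Euc N → ℝ}

theorem cNs_pos (hs : s ∈ Ioo 0 1) : 0 < cNs N s :=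
  have := hs.1
  div_pos (mul_pos (by positivity) (Gamma_pos_of_pos (by positivity)))
    (mul_pos (by positivity) (Gamma_pos_of_pos (sub_pos.2 hs.2)))

theorem continuousAt_cNs (hs : s ∈ Ioo 0 1) : ContinuousAt (cNs N) s := by
  have hs_pos : 0 < s := hs.1
  have h_num : ContinuousAt (fun s : ℝ => Gamma ((N + 2 * s) / 2)) s :=
    ContinuousAt.comp' (continuousAt_Gamma_of_pos (by positivity)) (by fun_prop)
  have h_den : ContinuousAt (fun s : ℝ => Gamma (1 - s)) s :=
    ContinuousAt.comp' (continuousAt_Gamma_of_pos (sub_pos.2 hs.2)) (by fun_prop)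
  refine ((continuousAt_id.mul (continuousAt_const_rpow four_ne_zero)).mul h_num).div
    (continuousAt_const.mul h_den) ?_
  exact mul_ne_zero (by positivity) (Gamma_pos_of_pos (sub_pos.2 hs.2)).ne'

theorem critExp_pos (hN : 0 < N) (hs : 2 * s < N) : 0 < critExp N s :=
  div_pos (by positivity) (sub_pos.2 hs)

theorem continuousAt_critExp (hs : 2 * s < N) : ContinuousAt (critExp N) s :=
  continuousAt_const.div (by fun_prop) (sub_pos.2 hs).ne'

theorem gagliardo_nonneg (hs : s ∈ Ioo 0 1) : 0 ≤ gagliardo N s U u :=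
  mul_nonneg (half_pos (cNs_pos hs)).le <| integral_nonneg fun x => integral_nonneg fun y =>
    gagliardoIntegrand_nonneg u _ (x, y)

theorem continuousAt_gagliardo (hu : testFun N U u) (hs : s ∈ Ioo 0 1) :
    ContinuousAt (fun s => gagliardo N s U u) s := by
  obtain ⟨L, hL⟩ := (hu.1.of_le (m := 1) (mod_cast le_top)).lipschitzWith_of_hasCompactSupport
    hu.2.1 one_ne_zero
  have h_exponent : (N : ℝ) + 2 * s ∈ Ioo (N : ℝ) (N + 2) :=
    ⟨by linarith [hs.1], by linarith [hs.2]⟩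
  have h_int := continuousOn_setIntegral_gagliardoIntegrand volume hL hu.2.1 U
  rw [finrank_euclideanSpace_fin] at h_int
  exact ((continuousAt_cNs hs).div_const 2).mul <|
    (h_int.continuousAt (Ioo_mem_nhds h_exponent.1 h_exponent.2)).comp'
      (f := fun s : ℝ => (N : ℝ) + 2 * s) (by fun_prop)

theorem setIntegral_abs_rpow_pos (hu : testFun N U u) (hu0 : ¬∀ x, u x = 0) {p : ℝ}
    (hp : 0 < p) : 0 < ∫ x in U, |u x| ^ p := by
  obtain ⟨x, hx⟩ := not_forall.1 hu0
  rw [setIntegral_eq_integral_of_forall_compl_eq_zero]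
  · exact integral_abs_rpow_pos volume hu.1.continuous hu.2.1 hp hx
  · intro y hy
    simp [image_eq_zero_of_notMem_tsupport fun h => hy (hu.2.2 h), hp.ne']

theorem lpNormOn_pos (hu : testFun N U u) (hu0 : ¬∀ x, u x = 0) {p : ℝ} (hp : 0 < p) :
    0 < lpNormOn N p U u :=
  rpow_pos_of_pos (setIntegral_abs_rpow_pos hu hu0 hp) _

theorem continuousAt_lpNormOn (hu : testFun N U u) (hu0 : ¬∀ x, u x = 0) {p : ℝ} (hp : 0 < p) :
    ContinuousAt (fun p => lpNormOn N p U u) p :=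
  have h_int := continuousOn_integral_abs_rpow (volume.restrict U) hu.1.continuous hu.2.1
  (h_int.continuousAt (Ioi_mem_nhds hp)).rpow (continuousAt_const.div continuousAt_id hp.ne')
    (.inl (setIntegral_abs_rpow_pos hu hu0 hp).ne')

/-- The Sobolev quotient `Q_{N,s,U}(u) / ‖u‖²` with the norm of `L^{2*_s}(U)`; its infimum over
nonzero test functions is `S_{N,s}(U)`. -/
def sobolevQuotient (N : ℕ) (s : ℝ) (U : Set (Euc N)) (u : Euc N → ℝ) : ℝ :=
  gagliardo N s U u / (lpNormOn N (critExp N s) U u) ^ 2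

theorem sobolevQuotient_nonneg (hs : s ∈ Ioo 0 1) : 0 ≤ sobolevQuotient N s U u :=
  div_nonneg (gagliardo_nonneg hs) (sq_nonneg _)

theorem continuousAt_sobolevQuotient (hu : testFun N U u) (hu0 : ¬∀ x, u x = 0)
    (hs : s ∈ Ioo 0 1) (hsN : 2 * s < N) :
    ContinuousAt (fun s => sobolevQuotient N s U u) s := by
  have hN : (0 : ℝ) < N := by linarith [hs.1]
  have hp : 0 < critExp N s := critExp_pos (mod_cast hN) hsN
  have h_norm : ContinuousAt (fun s => lpNormOn N (critExp N s) U u) s :=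
    (continuousAt_lpNormOn hu hu0 hp).comp' (continuousAt_critExp hsN)
  exact (continuousAt_gagliardo hu hs).div (h_norm.pow 2) (pow_pos (lpNormOn_pos hu hu0 hp) 2).ne'

theorem sobolevConst_eq_iInf (N : ℕ) (s : ℝ) (U : Set (Euc N)) :
    sobolevConst N s U =
      ⨅ u : {u : Euc N → ℝ // testFun N U u ∧ ¬∀ x, u x = 0}, sobolevQuotient N s U u := by
  unfold sobolevConst iInf
  congr 1
  ext r
  simp only [mem_ofPred_eq, mem_range, Subtype.exists, exists_prop, and_assoc, sobolevQuotient,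
    eq_comm (a := r)]

theorem sobolevConst_nonneg (hs : s ∈ Ioo 0 1) : 0 ≤ sobolevConst N s U := by
  rw [sobolevConst_eq_iInf]
  exact iInf_nonneg fun _ => sobolevQuotient_nonneg hs

theorem isBoundedUnder_ge_sobolevConst (hs : s ∈ Ioo 0 1) :
    (𝓝 s).IsBoundedUnder (· ≥ ·) fun s => sobolevConst N s U :=
  isBoundedUnder_of_eventually_ge <|
    Eventually.mono (Ioo_mem_nhds hs.1 hs.2) fun _ => sobolevConst_nonneg

end SobolevQuotient

theorem statement2_general (N : ℕ) (Ω : Set (Euc N)) (s₀ : ℝ) (hs₀ : s₀ ∈ Ioo 0 1)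
    (hN : 2 * s₀ < N) : UpperSemicontinuousAt (fun s => sobolevConst N s Ω) s₀ := by
  simp only [sobolevConst_eq_iInf]
  refine upperSemicontinuousAt_ciInf ?_ fun u =>
    (continuousAt_sobolevQuotient u.2.1 u.2.2 hs₀ hN).upperSemicontinuousAt
  filter_upwards [Ioo_mem_nhds hs₀.1 hs₀.2] with s hs
  exact ⟨0, forall_mem_range.2 fun _ => sobolevQuotient_nonneg hs⟩

/-- limsup_{s ↘ s₀} S_{N,s}(Ω) ≤ S_{N,s₀}(Ω) for s₀ ∈ [1/2,1). -/
theorem statement2 (N : ℕ) (hN : 2 ≤ N) (Ω : Set (Euc N)) (hΩo : IsOpen Ω)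
    (hΩb : Bornology.IsBounded Ω) (hΩL : IsLipschitzSet N Ω)
    (s₀ : ℝ) (hs₀ : s₀ ∈ Set.Ico (1/2 : ℝ) 1) :
    Filter.limsup (fun s : ℝ => sobolevConst N s Ω) (𝓝[>] s₀) ≤ sobolevConst N s₀ Ω := by
  have hs : s₀ ∈ Ioo 0 1 := ⟨by linarith [hs₀.1], hs₀.2⟩
  have hsN : 2 * s₀ < N := by linarith [hs₀.2, (Nat.ofNat_le_cast (α := ℝ)).2 hN]
  exact limsup_le_of_upperSemicontinuousAt (statement2_general N Ω s₀ hs hsN) nhdsWithin_le_nhds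
    (isBoundedUnder_ge_sobolevConst hs)
end
end

section
/- For each integer k ≥ 2 define χ_k : (0,∞) → ℝ by χ_k(t) = 0 for t ≤ 1/k², χ_k(t) = log(k²t)/log k for 1/k² ≤ t ≤ 1/k, and χ_k(t) = 1 for t ≥ 1/k. Then χ_k → 1 in H^{1/2}((0,∞)) as k → ∞; that is, ∫₀^∞ (χ_k(t) − 1)² dt → 0 and ∫₀^∞ ∫₀^∞ (χ_k(x) − χ_k(y))²/(x − y)² dx dy → 0 as k → ∞. -/
open MeasureTheory Real Filter Topology Set

noncomputable section

/-!
On the set where it is not locally constant, the cut-off with radii `a < b` is `log t / L` up to a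
constant, with `L = log (b / a)`. Its Gagliardo integrand is therefore governed by that of `log`,
which in terms of the ratio `s = y / x` is `x⁻² (log s / (s - 1))²`, and this kernel has a finite
integral `C` over `s > 0`. Integrating in `y` first leaves at most `C / L²` times `1 / a` for
`x ≤ a`, `1 / x` for `a ≤ x ≤ b` and `b / x²` for `x ≥ b`. Integrating in `x` gives the bound
`C (2 + L) / L²`, of order `1 / L`: the mass `L` of `dx / x` between the radii costs only one of
the two factors `1 / L`.
-/

/-- The difference quotient of `log` at `1`, squared. It is the profile, in the ratio `s = y / x`,
of the Gagliardo integrand of `log`. At `s = 1` division by zero gives the value `0`. -/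
def logKernel (s : ℝ) : ℝ := (log s / (s - 1)) ^ 2

lemma logKernel_nonneg (s : ℝ) : 0 ≤ logKernel s := sq_nonneg _

lemma measurable_logKernel : Measurable logKernel := by
  unfold logKernel
  fun_prop

lemma abs_log_le_abs_sub_inv_div_two {u : ℝ} (hu : 0 < u) : |log u| ≤ |u - u⁻¹| / 2 := by
  calc |log u| ≤ sinh |log u| := self_le_sinh_iff.2 (abs_nonneg _)
    _ = |u - u⁻¹| / 2 := by rw [← abs_sinh, sinh_log hu, abs_div, abs_two]

lemma logKernel_le_inv {s : ℝ} (hs : 0 < s) : logKernel s ≤ s⁻¹ := by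
  obtain ⟨u, hu, rfl⟩ : ∃ u : ℝ, 0 < u ∧ u ^ 2 = s := ⟨√s, sqrt_pos.2 hs, sq_sqrt hs.le⟩
  have hlog : |log (u ^ 2)| ≤ u⁻¹ * |u ^ 2 - 1| := by
    calc |log (u ^ 2)| = 2 * |log u| := by rw [log_pow, Nat.cast_two, abs_mul, abs_two]
      _ ≤ |u - u⁻¹| := by linarith [abs_log_le_abs_sub_inv_div_two hu]
      _ = u⁻¹ * |u ^ 2 - 1| := by
        rw [← abs_of_pos (inv_pos.2 hu), ← abs_mul, abs_of_pos (inv_pos.2 hu)]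
        congr 1
        field_simp
  rw [logKernel, ← inv_pow]
  refine sq_le_sq.2 ?_
  rw [abs_div, abs_of_pos (inv_pos.2 hu)]
  exact div_le_of_le_mul₀ (abs_nonneg _) (by positivity) hlog

lemma logKernel_le_four_div_sqrt {s : ℝ} (hs : 0 < s) : logKernel s ≤ 4 / (√s * (√s + 1) ^ 2) := by
  have hr : 0 < √s := sqrt_pos.2 hs
  calc logKernel s = 4 / (√s + 1) ^ 2 * logKernel √s := by
        have hsub : s - 1 = (√s + 1) * (√s - 1) := by linear_combination -(sq_sqrt hs.le)
        rw [logKernel, logKernel, log_sqrt hs.le, hsub, div_mul_eq_div_div_swap, div_right_comm]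
        simp only [div_pow]
        field_simp
        norm_num
    _ ≤ 4 / (√s + 1) ^ 2 * (√s)⁻¹ := by gcongr; exact logKernel_le_inv hr
    _ = 4 / (√s * (√s + 1) ^ 2) := by field_simp

lemma integrableOn_logKernel : IntegrableOn logKernel (Ioi 0) := by
  have hdom {S : Set ℝ} {r : ℝ} (hS : MeasurableSet S) (hr : IntegrableOn (fun s ↦ 4 * s ^ r) S)
      (hle : ∀ s ∈ S, logKernel s ≤ 4 * s ^ r) : IntegrableOn logKernel S := by
    refine Integrable.mono' hr measurable_logKernel.aestronglyMeasurable ?_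
    filter_upwards [ae_restrict_mem hS] with s hs
    simpa only [norm_of_nonneg (logKernel_nonneg s)] using hle s hs
  rw [← Ioc_union_Ioi_eq_Ioi (zero_le_one : (0 : ℝ) ≤ 1)]
  refine (hdom (r := -1 / 2) measurableSet_Ioc ?_ fun s hs ↦ ?_).union
    (hdom (r := -3 / 2) measurableSet_Ioi ?_ fun s hs ↦ ?_)
  · exact ((intervalIntegrable_iff_integrableOn_Ioc_of_le zero_le_one).1
      (intervalIntegral.intervalIntegrable_rpow' (by norm_num))).const_mul 4
  · refine (logKernel_le_four_div_sqrt hs.1).trans ?_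
    have hr : 0 < √s := sqrt_pos.2 hs.1
    rw [neg_div, rpow_neg hs.1.le, ← sqrt_eq_rpow, ← div_eq_mul_inv]
    gcongr
    exact le_mul_of_one_le_right hr.le (one_le_pow₀ (by linarith))
  · exact (integrableOn_Ioi_rpow_of_lt (by norm_num) one_pos).const_mul 4
  · have hs0 : 0 < s := one_pos.trans hs
    have hr : 0 < √s := sqrt_pos.2 hs0
    have hpow : s ^ (3 / 2 : ℝ) = √s ^ 3 := by
      rw [sqrt_eq_rpow, ← rpow_natCast, ← rpow_mul hs0.le]
      norm_num
    refine (logKernel_le_four_div_sqrt hs0).trans ?_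
    rw [neg_div, rpow_neg hs0.le, hpow, ← div_eq_mul_inv]
    gcongr
    nlinarith

lemma lintegral_Ioi_enorm_comp_div {g : ℝ → ℝ} (hg : IntegrableOn g (Ioi 0)) {c : ℝ}
    (hc : 0 < c) :
    ∫⁻ y in Ioi 0, ‖g (y / c)‖ₑ = ENNReal.ofReal (c * ∫ s in Ioi 0, ‖g s‖) := by
  have hint : IntegrableOn (fun y ↦ g (y * c⁻¹)) (Ioi 0) :=
    (integrableOn_Ioi_comp_mul_right_iff g 0 (inv_pos.2 hc)).2 (by rwa [zero_mul])
  simp only [div_eq_mul_inv]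
  rw [← ofReal_integral_norm_eq_lintegral_enorm hint,
    integral_comp_mul_right_Ioi (fun s ↦ ‖g s‖) 0 (inv_pos.2 hc), zero_mul, inv_inv, smul_eq_mul]

lemma setLIntegral_le_ofReal_setIntegral {α : Type*} [MeasurableSpace α] {μ : Measure α}
    {S : Set α} (hS : MeasurableSet S) {w : α → ℝ} (hw : IntegrableOn w S μ)
    (hw0 : ∀ x ∈ S, 0 ≤ w x) {G : α → ENNReal} (hG : ∀ x ∈ S, G x ≤ ENNReal.ofReal (w x)) :
    ∫⁻ x in S, G x ∂μ ≤ ENNReal.ofReal (∫ x in S, w x ∂μ) := by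
  rw [ofReal_integral_eq_lintegral_ofReal hw ((ae_restrict_iff' hS).2 (ae_of_all _ hw0))]
  exact setLIntegral_mono' hS hG

lemma tendsto_integral_of_tendsto_lintegral_enorm {ι α : Type*} [MeasurableSpace α]
    {μ : Measure α} {l : Filter ι} {F : ι → α → ℝ}
    (h : Tendsto (fun i ↦ ∫⁻ x, ‖F i x‖ₑ ∂μ) l (𝓝 0)) :
    Tendsto (fun i ↦ ∫ x, F i x ∂μ) l (𝓝 0) :=
  tendsto_zero_iff_enorm_tendsto_zero.2 <|
    tendsto_of_tendsto_of_tendsto_of_le_of_le tendsto_const_nhds h (fun _ ↦ zero_le)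
      fun _ ↦ enorm_integral_le_lintegral_enorm _

/-- The contribution of the point `x` to the squared `H^{1/2}` seminorm of `f` on `U`. -/
def gagliardoHalfDensity (U : Set ℝ) (f : ℝ → ℝ) (x : ℝ) : ENNReal :=
  ∫⁻ y in U, ‖(f x - f y) ^ 2 / (x - y) ^ 2‖ₑ

/-- The squared `H^{1/2}` seminorm of `f` on `U`, as an extended nonnegative real so that it is
meaningful without any integrability assumption. -/
def gagliardoHalf (U : Set ℝ) (f : ℝ → ℝ) : ENNReal :=
  ∫⁻ x in U, gagliardoHalfDensity U f x

lemma gagliardoHalf_congr {U : Set ℝ} (hU : MeasurableSet U) {f g : ℝ → ℝ} (hfg : EqOn f g U) :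
    gagliardoHalf U f = gagliardoHalf U g :=
  setLIntegral_congr_fun hU fun x hx ↦ setLIntegral_congr_fun hU fun y hy ↦ by
    simp only [hfg hx, hfg hy]

lemma tendsto_integral_of_tendsto_gagliardoHalf {ι : Type*} {l : Filter ι} {U : Set ℝ}
    {f : ι → ℝ → ℝ} (h : Tendsto (fun i ↦ gagliardoHalf U (f i)) l (𝓝 0)) :
    Tendsto (fun i ↦ ∫ x in U, ∫ y in U, (f i x - f i y) ^ 2 / (x - y) ^ 2) l (𝓝 0) :=
  tendsto_integral_of_tendsto_lintegral_enorm <|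
    tendsto_of_tendsto_of_tendsto_of_le_of_le tendsto_const_nhds h (fun _ ↦ zero_le)
      fun _ ↦ lintegral_mono fun _ ↦ enorm_integral_le_lintegral_enorm _

/-- Moving the base point from `x` to `c` costs at most the factor `r` in the distance to every `y`
that contributes, and turns the Gagliardo integrand of `f` into the scale-invariant kernel. -/
lemma sq_div_sq_le_logKernel {f : ℝ → ℝ} {x y c r L : ℝ} (hc : c ≠ 0)
    (hlog : |f x - f y| ≤ |log (y / c)| / L) (hdist : f x ≠ f y → |y - c| ≤ r * |x - y|) :
    (f x - f y) ^ 2 / (x - y) ^ 2 ≤ (r / (c * L)) ^ 2 * logKernel (y / c) := by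
  by_cases hfxy : f x = f y
  · rw [hfxy, sub_self, zero_pow two_ne_zero, zero_div]
    exact mul_nonneg (sq_nonneg _) (logKernel_nonneg _)
  have hxy : 0 < |x - y| := abs_pos.2 (sub_ne_zero.2 fun h ↦ hfxy (congrArg f h))
  have hyc : 0 < |y - c| := by
    refine abs_pos.2 (sub_ne_zero.2 fun h ↦ hfxy (sub_eq_zero.1 (abs_nonpos_iff.1 ?_)))
    simpa [h, hc] using hlog
  have hquot : |f x - f y| / |x - y| ≤ |log (y / c)| / L * (r / |y - c|) := by
    rw [div_le_iff₀ hxy, mul_assoc, div_mul_eq_mul_div r]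
    exact hlog.trans (le_mul_of_one_le_right ((abs_nonneg _).trans hlog)
      ((one_le_div hyc).2 (hdist hfxy)))
  calc (f x - f y) ^ 2 / (x - y) ^ 2 = (|f x - f y| / |x - y|) ^ 2 := by
        rw [div_pow, sq_abs, sq_abs]
    _ ≤ (|log (y / c)| / L * (r / |y - c|)) ^ 2 := by gcongr
    _ = (r / (c * L)) ^ 2 * logKernel (y / c) := by
        rw [logKernel, div_sub_one hc, div_div_eq_mul_div]
        simp only [mul_pow, div_pow, sq_abs]
        field_simp

lemma gagliardoHalfDensity_le_of_abs_sub_le_log {f : ℝ → ℝ} {x c r L : ℝ} (hc : 0 < c)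
    (hlog : ∀ y > 0, |f x - f y| ≤ |log (y / c)| / L)
    (hdist : ∀ y > 0, f x ≠ f y → |y - c| ≤ r * |x - y|) :
    gagliardoHalfDensity (Ioi 0) f x ≤
      ENNReal.ofReal (r ^ 2 / c * ((∫ s in Ioi 0, logKernel s) / L ^ 2)) := by
  calc gagliardoHalfDensity (Ioi 0) f x
      ≤ ∫⁻ y in Ioi 0, ‖(r / (c * L)) ^ 2‖ₑ * ‖logKernel (y / c)‖ₑ := by
        refine setLIntegral_mono' measurableSet_Ioi fun y hy ↦ ?_
        rw [← enorm_mul]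
        refine enorm_le_iff_norm_le.2 (abs_le_abs_of_nonneg (by positivity) ?_)
        exact sq_div_sq_le_logKernel hc.ne' (hlog y hy) (hdist y hy)
    _ = ENNReal.ofReal ((r / (c * L)) ^ 2 * (c * ∫ s in Ioi 0, logKernel s)) := by
        rw [lintegral_const_mul' _ _ enorm_ne_top,
          lintegral_Ioi_enorm_comp_div integrableOn_logKernel hc,
          enorm_of_nonneg (sq_nonneg _), ← ENNReal.ofReal_mul (sq_nonneg _)]
        simp only [norm_of_nonneg (logKernel_nonneg _)]
    _ = ENNReal.ofReal (r ^ 2 / c * ((∫ s in Ioi 0, logKernel s) / L ^ 2)) := by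
        congr 1
        field_simp

/-- The logarithmic cut-off between the radii `a < b`: on the positive half-line it vanishes up
to `a`, equals `1` from `b` on, and is affine in `log t` in between. Only its values at `t > 0` are
meaningful, since `log t` stands for `log |t|` when `t < 0`. -/
def logCutoff (a b t : ℝ) : ℝ := max (min (log (t / a) / log (b / a)) 1) 0

section LogCutoff

variable {a b x y t : ℝ}

lemma logCutoff_nonneg (a b t : ℝ) : 0 ≤ logCutoff a b t := le_max_right _ _

lemma logCutoff_le_one (a b t : ℝ) : logCutoff a b t ≤ 1 := max_le (min_le_right _ _) zero_le_one

lemma log_div_pos (ha : 0 < a) (hab : a < b) : 0 < log (b / a) :=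
  log_pos ((one_lt_div ha).2 hab)

lemma logCutoff_of_le_left (ha : 0 < a) (hab : a < b) (ht : 0 < t) (hta : t ≤ a) :
    logCutoff a b t = 0 := by
  have hlog : log (t / a) ≤ 0 := log_nonpos (by positivity) ((div_le_one ha).2 hta)
  exact max_eq_right <|
    (min_le_left _ _).trans (div_nonpos_of_nonpos_of_nonneg hlog (log_div_pos ha hab).le)

lemma logCutoff_of_right_le (ha : 0 < a) (hab : a < b) (hbt : b ≤ t) : logCutoff a b t = 1 := by
  have hlog : log (b / a) ≤ log (t / a) :=
    log_le_log (div_pos (ha.trans hab) ha) (by gcongr)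
  rw [logCutoff, min_eq_right ((one_le_div (log_div_pos ha hab)).2 hlog),
    max_eq_left zero_le_one]

lemma logCutoff_of_mem_Icc (ha : 0 < a) (hab : a < b) (ht : t ∈ Icc a b) :
    logCutoff a b t = log (t / a) / log (b / a) := by
  have hL := log_div_pos ha hab
  have ht0 : 0 < t := ha.trans_le ht.1
  have hle : log (t / a) ≤ log (b / a) := log_le_log (by positivity) (by gcongr; exact ht.2)
  have hnonneg : 0 ≤ log (t / a) := log_nonneg ((one_le_div ha).2 ht.1)
  rw [logCutoff, min_eq_left ((div_le_one hL).2 hle), max_eq_left (by positivity)]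

lemma abs_logCutoff_sub_le (ha : 0 < a) (hab : a < b) (hx : 0 < x) (hy : 0 < y) :
    |logCutoff a b x - logCutoff a b y| ≤ |log (y / x)| / log (b / a) := by
  calc |logCutoff a b x - logCutoff a b y|
      ≤ |log (x / a) / log (b / a) - log (y / a) / log (b / a)| :=
        (abs_max_sub_max_le_abs _ _ _).trans (by
          simpa using abs_min_sub_min_le_max (log (x / a) / log (b / a)) 1
            (log (y / a) / log (b / a)) 1)
    _ = |log (y / x)| / log (b / a) := by
        rw [← sub_div, abs_div, abs_of_pos (log_div_pos ha hab), abs_sub_comm,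
          log_div hx.ne' ha.ne', log_div hy.ne' ha.ne', log_div hy.ne' hx.ne',
          sub_sub_sub_cancel_right]

lemma lintegral_logCutoff_sub_one_sq_le (ha : 0 < a) (hab : a < b) :
    ∫⁻ t in Ioi 0, ‖(logCutoff a b t - 1) ^ 2‖ₑ ≤ ENNReal.ofReal b := by
  have hnear (t : ℝ) : ‖(logCutoff a b t - 1) ^ 2‖ₑ ≤ 1 := by
    have h0 := logCutoff_nonneg a b t
    have h1 := logCutoff_le_one a b t
    rw [enorm_of_nonneg (sq_nonneg _), ENNReal.ofReal_le_one]
    nlinarith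
  have hfar : ∀ t ∈ Ioi b, ‖(logCutoff a b t - 1) ^ 2‖ₑ ≤ 0 := fun t ht ↦ by
    simp [logCutoff_of_right_le ha hab (mem_Ioi.1 ht).le]
  rw [← Ioc_union_Ioi_eq_Ioi (ha.trans hab).le]
  calc ∫⁻ t in Ioc 0 b ∪ Ioi b, ‖(logCutoff a b t - 1) ^ 2‖ₑ
      ≤ (∫⁻ _ in Ioc 0 b, 1) + ∫⁻ _ in Ioi b, 0 :=
        (lintegral_union_le _ _ _).trans <|
          add_le_add (lintegral_mono hnear) (setLIntegral_mono' measurableSet_Ioi hfar)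
    _ = ENNReal.ofReal b := by simp

lemma gagliardoHalfDensity_logCutoff_le_of_le_left (ha : 0 < a) (hab : a < b)
    (hx : 0 < x) (hxa : x ≤ a) :
    gagliardoHalfDensity (Ioi 0) (logCutoff a b) x ≤
      ENNReal.ofReal (a⁻¹ * ((∫ s in Ioi 0, logKernel s) / log (b / a) ^ 2)) := by
  have hfx : logCutoff a b x = logCutoff a b a :=
    (logCutoff_of_le_left ha hab hx hxa).trans (logCutoff_of_le_left ha hab ha le_rfl).symm
  have h := gagliardoHalfDensity_le_of_abs_sub_le_log (x := x) (f := logCutoff a b) (r := 1) ha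
    (fun y hy ↦ hfx ▸ abs_logCutoff_sub_le ha hab ha hy) fun y hy hne ↦ ?_
  · simpa only [one_pow, one_div] using h
  have hay : a < y := not_le.1 fun hya ↦ hne <|
    (logCutoff_of_le_left ha hab hx hxa).trans (logCutoff_of_le_left ha hab hy hya).symm
  rw [one_mul, abs_of_pos (sub_pos.2 hay), abs_sub_comm, abs_of_pos (by linarith)]
  linarith

lemma gagliardoHalfDensity_logCutoff_le (ha : 0 < a) (hab : a < b) (hx : 0 < x) :
    gagliardoHalfDensity (Ioi 0) (logCutoff a b) x ≤
      ENNReal.ofReal (x⁻¹ * ((∫ s in Ioi 0, logKernel s) / log (b / a) ^ 2)) := by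
  have h := gagliardoHalfDensity_le_of_abs_sub_le_log (x := x) (f := logCutoff a b) (r := 1) hx
    (fun y hy ↦ abs_logCutoff_sub_le ha hab hx hy) fun y _ _ ↦ by rw [one_mul, abs_sub_comm]
  simpa only [one_pow, one_div] using h

lemma gagliardoHalfDensity_logCutoff_le_of_right_le (ha : 0 < a) (hab : a < b) (hbx : b ≤ x) :
    gagliardoHalfDensity (Ioi 0) (logCutoff a b) x ≤
      ENNReal.ofReal (b * x ^ (-2 : ℝ) * ((∫ s in Ioi 0, logKernel s) / log (b / a) ^ 2)) := by
  have hb : 0 < b := ha.trans hab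
  have hx : 0 < x := hb.trans_le hbx
  have hfx : logCutoff a b x = logCutoff a b b :=
    (logCutoff_of_right_le ha hab hbx).trans (logCutoff_of_right_le ha hab le_rfl).symm
  have h := gagliardoHalfDensity_le_of_abs_sub_le_log (x := x) (f := logCutoff a b) (r := b / x) hb
    (fun y hy ↦ hfx ▸ abs_logCutoff_sub_le ha hab hb hy) fun y hy hne ↦ ?_
  · convert h using 3
    rw [rpow_neg hx.le, rpow_two]
    field_simp
  have hyb : y < b := not_le.1 fun hby ↦ hne <|
    (logCutoff_of_right_le ha hab hbx).trans (logCutoff_of_right_le ha hab hby).symm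
  rw [abs_sub_comm, abs_of_pos (sub_pos.2 hyb), abs_of_pos (by linarith), div_mul_eq_mul_div,
    le_div_iff₀ hx]
  nlinarith

lemma integral_logKernel_div_log_sq_nonneg (a b : ℝ) :
    0 ≤ (∫ s in Ioi 0, logKernel s) / log (b / a) ^ 2 :=
  div_nonneg (integral_nonneg logKernel_nonneg) (sq_nonneg _)

lemma setLIntegral_Ioc_zero_gagliardoHalfDensity_logCutoff_le (ha : 0 < a) (hab : a < b) :
    ∫⁻ x in Ioc 0 a, gagliardoHalfDensity (Ioi 0) (logCutoff a b) x ≤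
      ENNReal.ofReal ((∫ s in Ioi 0, logKernel s) / log (b / a) ^ 2) := by
  refine (setLIntegral_le_ofReal_setIntegral measurableSet_Ioc
    (integrableOn_const measure_Ioc_lt_top.ne)
    (fun _ _ ↦ mul_nonneg (inv_nonneg.2 ha.le) (integral_logKernel_div_log_sq_nonneg a b))
    fun x hx ↦ gagliardoHalfDensity_logCutoff_le_of_le_left ha hab hx.1 hx.2).trans_eq ?_
  rw [setIntegral_const, volume_real_Ioc_of_le ha.le, sub_zero, smul_eq_mul,
    mul_inv_cancel_left₀ ha.ne']

lemma setLIntegral_Ioc_gagliardoHalfDensity_logCutoff_le (ha : 0 < a) (hab : a < b) :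
    ∫⁻ x in Ioc a b, gagliardoHalfDensity (Ioi 0) (logCutoff a b) x ≤
      ENNReal.ofReal (log (b / a) * ((∫ s in Ioi 0, logKernel s) / log (b / a) ^ 2)) := by
  have hb : 0 < b := ha.trans hab
  have hint : IntegrableOn (fun x : ℝ ↦ x⁻¹) (Ioc a b) :=
    (intervalIntegrable_iff_integrableOn_Ioc_of_le hab.le).1 <|
      intervalIntegrable_inv_iff.2 <| .inr <| notMem_uIcc_of_lt ha hb
  refine (setLIntegral_le_ofReal_setIntegral measurableSet_Ioc (hint.mul_const _)
    (fun x hx ↦ mul_nonneg (inv_nonneg.2 (ha.trans hx.1).le)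
      (integral_logKernel_div_log_sq_nonneg a b))
    fun x hx ↦ gagliardoHalfDensity_logCutoff_le ha hab (ha.trans hx.1)).trans_eq ?_
  rw [integral_mul_const, ← intervalIntegral.integral_of_le hab.le, integral_inv_of_pos ha hb]

lemma setLIntegral_Ioi_gagliardoHalfDensity_logCutoff_le (ha : 0 < a) (hab : a < b) :
    ∫⁻ x in Ioi b, gagliardoHalfDensity (Ioi 0) (logCutoff a b) x ≤
      ENNReal.ofReal ((∫ s in Ioi 0, logKernel s) / log (b / a) ^ 2) := by
  have hb : 0 < b := ha.trans hab
  have hint : IntegrableOn (fun x ↦ b * x ^ (-2 : ℝ)) (Ioi b) :=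
    (integrableOn_Ioi_rpow_of_lt (by norm_num) hb).const_mul b
  refine (setLIntegral_le_ofReal_setIntegral measurableSet_Ioi (hint.mul_const _)
    (fun x hx ↦ mul_nonneg (mul_nonneg hb.le (rpow_nonneg (hb.trans hx).le _))
      (integral_logKernel_div_log_sq_nonneg a b))
    fun x hx ↦ gagliardoHalfDensity_logCutoff_le_of_right_le ha hab (le_of_lt hx)).trans_eq ?_
  rw [integral_mul_const, integral_const_mul, integral_Ioi_rpow_of_lt (by norm_num) hb]
  norm_num [rpow_neg_one, hb.ne']

lemma gagliardoHalf_logCutoff_le (ha : 0 < a) (hab : a < b) :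
    gagliardoHalf (Ioi 0) (logCutoff a b) ≤
      ENNReal.ofReal
        ((2 + log (b / a)) * ((∫ s in Ioi 0, logKernel s) / log (b / a) ^ 2)) := by
  have hL := log_div_pos ha hab
  have hM := integral_logKernel_div_log_sq_nonneg a b
  have hsplit : Ioi (0 : ℝ) = Ioc 0 a ∪ (Ioc a b ∪ Ioi b) := by
    rw [Ioc_union_Ioi_eq_Ioi hab.le, Ioc_union_Ioi_eq_Ioi ha.le]
  set M := (∫ s in Ioi 0, logKernel s) / log (b / a) ^ 2
  set G := gagliardoHalfDensity (Ioi 0) (logCutoff a b)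
  calc gagliardoHalf (Ioi 0) (logCutoff a b) = ∫⁻ x in Ioc 0 a ∪ (Ioc a b ∪ Ioi b), G x :=
        congrArg (fun S ↦ ∫⁻ x in S, G x) hsplit
    _ ≤ (∫⁻ x in Ioc 0 a, G x) + ((∫⁻ x in Ioc a b, G x) + ∫⁻ x in Ioi b, G x) :=
        (lintegral_union_le _ _ _).trans (add_le_add_right (lintegral_union_le _ _ _) _)
    _ ≤ ENNReal.ofReal M + (ENNReal.ofReal (log (b / a) * M) + ENNReal.ofReal M) :=
        add_le_add (setLIntegral_Ioc_zero_gagliardoHalfDensity_logCutoff_le ha hab) <|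
          add_le_add (setLIntegral_Ioc_gagliardoHalfDensity_logCutoff_le ha hab)
            (setLIntegral_Ioi_gagliardoHalfDensity_logCutoff_le ha hab)
    _ = ENNReal.ofReal ((2 + log (b / a)) * M) := by
        rw [← ENNReal.ofReal_add (by positivity) hM, ← ENNReal.ofReal_add hM (by positivity)]
        ring_nf

end LogCutoff

lemma eqOn_logCutoff {a b : ℝ} (ha : 0 < a) (hab : a < b) {f : ℝ → ℝ}
    (h0 : ∀ t, 0 < t → t ≤ a → f t = 0)
    (hlog : ∀ t, a ≤ t → t ≤ b → f t = log (t / a) / log (b / a))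
    (h1 : ∀ t, b ≤ t → f t = 1) : EqOn f (logCutoff a b) (Ioi 0) := by
  intro t ht
  rcases le_total t a with hta | hat
  · rw [h0 t ht hta, logCutoff_of_le_left ha hab ht hta]
  rcases le_total t b with htb | hbt
  · rw [hlog t hat htb, logCutoff_of_mem_Icc ha hab ⟨hat, htb⟩]
  · rw [h1 t hbt, logCutoff_of_right_le ha hab hbt]

lemma eqOn_logCutoff_one_div_sq {k : ℝ} (hk : 1 < k) {f : ℝ → ℝ}
    (h0 : ∀ t, 0 < t → t ≤ 1 / k ^ 2 → f t = 0)
    (hlog : ∀ t, 1 / k ^ 2 ≤ t → t ≤ 1 / k → f t = log (k ^ 2 * t) / log k)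
    (h1 : ∀ t, 1 / k ≤ t → f t = 1) : EqOn f (logCutoff (1 / k ^ 2) (1 / k)) (Ioi 0) := by
  have hk0 : 0 < k := one_pos.trans hk
  have hlt : 1 / k ^ 2 < 1 / k := one_div_lt_one_div_of_lt hk0 (lt_self_pow₀ hk one_lt_two)
  refine eqOn_logCutoff (by positivity) hlt h0 (fun t hat htb ↦ ?_) h1
  have hratio : 1 / k / (1 / k ^ 2) = k := by field_simp
  rw [hlog t hat htb, hratio, div_div_eq_mul_div, div_one, mul_comm]

theorem statement6_general {ι : Type*} {l : Filter ι} {a b : ι → ℝ} {χ : ι → ℝ → ℝ}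
    (ha : ∀ᶠ i in l, 0 < a i) (hb : Tendsto b l (𝓝 0))
    (hab : Tendsto (fun i ↦ b i / a i) l atTop)
    (hχ : ∀ᶠ i in l, EqOn (χ i) (logCutoff (a i) (b i)) (Ioi 0)) :
    Tendsto (fun i ↦ ∫⁻ t in Ioi 0, ‖(χ i t - 1) ^ 2‖ₑ) l (𝓝 0) ∧
    Tendsto (fun i ↦ gagliardoHalf (Ioi 0) (χ i)) l (𝓝 0) := by
  have hlt : ∀ᶠ i in l, a i < b i := by
    filter_upwards [ha, hab.eventually_gt_atTop 1] with i hi hi' using (one_lt_div hi).1 hi'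
  constructor
  · refine tendsto_of_tendsto_of_tendsto_of_le_of_le' tendsto_const_nhds
      (by simpa using ENNReal.tendsto_ofReal hb) (.of_forall fun _ ↦ zero_le) ?_
    filter_upwards [ha, hlt, hχ] with i hai habi hχi
    refine (setLIntegral_congr_fun measurableSet_Ioi fun t ht ↦ ?_).trans_le
      (lintegral_logCutoff_sub_one_sq_le hai habi)
    simp only [hχi ht]
  · have hinv : Tendsto (fun i ↦ (log (b i / a i))⁻¹) l (𝓝 0) :=
      (tendsto_log_atTop.comp hab).inv_tendsto_atTop
    have hbound : Tendsto (fun i ↦ (∫ s in Ioi 0, logKernel s) *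
        (2 * (log (b i / a i))⁻¹ ^ 2 + (log (b i / a i))⁻¹)) l (𝓝 0) := by
      simpa using (((hinv.pow 2).const_mul 2).add hinv).const_mul (∫ s in Ioi 0, logKernel s)
    refine tendsto_of_tendsto_of_tendsto_of_le_of_le' tendsto_const_nhds
      (by simpa using ENNReal.tendsto_ofReal hbound) (.of_forall fun _ ↦ zero_le) ?_
    filter_upwards [ha, hlt, hχ] with i hai habi hχi
    rw [gagliardoHalf_congr measurableSet_Ioi hχi]
    refine (gagliardoHalf_logCutoff_le hai habi).trans_eq ?_
    have hL := (log_div_pos hai habi).ne'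
    congr 1
    field_simp

/-- the logarithmic cut-off functions χ_k converge to 1 in H^{1/2}((0,∞)). -/
theorem statement6 (χ : ℕ → ℝ → ℝ)
    (h0 : ∀ k : ℕ, 2 ≤ k → ∀ t : ℝ, 0 < t → t ≤ 1 / (k : ℝ) ^ 2 → χ k t = 0)
    (h1 : ∀ k : ℕ, 2 ≤ k → ∀ t : ℝ, 1 / (k : ℝ) ^ 2 ≤ t → t ≤ 1 / (k : ℝ) →
      χ k t = Real.log ((k : ℝ) ^ 2 * t) / Real.log (k : ℝ))
    (h2 : ∀ k : ℕ, 2 ≤ k → ∀ t : ℝ, 1 / (k : ℝ) ≤ t → χ k t = 1) :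
    Tendsto (fun k => ∫ t in Set.Ioi (0 : ℝ), (χ k t - 1) ^ 2) atTop (𝓝 0) ∧
    Tendsto (fun k => ∫ x in Set.Ioi (0 : ℝ), ∫ y in Set.Ioi (0 : ℝ),
      (χ k x - χ k y) ^ 2 / (x - y) ^ 2) atTop (𝓝 0) := by
  have hpos : ∀ᶠ k : ℕ in atTop, 0 < 1 / (k : ℝ) ^ 2 := by
    filter_upwards [eventually_gt_atTop 0] with k hk using by positivity
  have hratio : Tendsto (fun k : ℕ ↦ 1 / (k : ℝ) / (1 / (k : ℝ) ^ 2)) atTop atTop :=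
    tendsto_natCast_atTop_atTop.congr fun k ↦ by field_simp
  have hχ : ∀ᶠ k : ℕ in atTop, EqOn (χ k) (logCutoff (1 / (k : ℝ) ^ 2) (1 / k)) (Ioi 0) := by
    filter_upwards [eventually_ge_atTop 2] with k hk
    exact eqOn_logCutoff_one_div_sq (by exact_mod_cast hk) (h0 k hk) (h1 k hk) (h2 k hk)
  obtain ⟨hL2, hseminorm⟩ := statement6_general hpos tendsto_one_div_atTop_nhds_zero_nat hratio hχ
  exact ⟨tendsto_integral_of_tendsto_lintegral_enorm hL2,
    tendsto_integral_of_tendsto_gagliardoHalf hseminorm⟩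
end
end
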